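/- arXiv:1709.10030 — 4 statements merged into one kernel-verified Lean document; each statement's English description precedes it below -/
import Mathlib

section
/- Let n be a positive integer, let Y ∈ ℝ^n, let γ > 0, let f be a positive integer, let v₁, …, v_f ∈ ℝ^n be a family of feature vectors, and let S ⊆ {1, …, f}. Then the minimum, over all w ∈ ℝ^f whose support is contained in S, of (1/2)‖Y − Σ_{j∈S} w_j v_j‖² + (1/(2γ)) Σ_{j∈S} w_j², equals (1/2) Yᵀ (I_n + γ Σ_{j∈S} v_j v_jᵀ)⁻¹ Y. -/
open Matrix

/-- the minimum of the ridge objective over vectors supported on `S`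
equals `(1/2) Yᵀ (I_n + γ Σ_{j∈S} v_j v_jᵀ)⁻¹ Y`. -/
theorem ridge_min_value_support (n : ℕ) (hn : 0 < n) (Y : Fin n → ℝ) (γ : ℝ) (hγ : 0 < γ)
    (f : ℕ) (hf : 0 < f) (v : Fin f → Fin n → ℝ) (S : Finset (Fin f)) :
    ∃ wopt : Fin f → ℝ, (∀ j ∉ S, wopt j = 0) ∧
      (∀ w : Fin f → ℝ, (∀ j ∉ S, w j = 0) →
        (1/2) * ((Y - ∑ j ∈ S, wopt j • v j) ⬝ᵥ (Y - ∑ j ∈ S, wopt j • v j)) +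
          (1/(2*γ)) * ∑ j ∈ S, (wopt j)^2 ≤
        (1/2) * ((Y - ∑ j ∈ S, w j • v j) ⬝ᵥ (Y - ∑ j ∈ S, w j • v j)) +
          (1/(2*γ)) * ∑ j ∈ S, (w j)^2) ∧
      (1/2) * ((Y - ∑ j ∈ S, wopt j • v j) ⬝ᵥ (Y - ∑ j ∈ S, wopt j • v j)) +
          (1/(2*γ)) * ∑ j ∈ S, (wopt j)^2 =
        (1/2) * (Y ⬝ᵥ ((1 + γ • ∑ j ∈ S, vecMulVec (v j) (v j))⁻¹.mulVec Y)) := by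
  set M : Matrix (Fin n) (Fin n) ℝ := 1 + γ • ∑ j ∈ S, vecMulVec (v j) (v j) with hM
  have hpd : M.PosDef := by
    refine Matrix.PosDef.add_posSemidef Matrix.PosDef.one ?_
    refine Matrix.PosSemidef.smul ?_ hγ.le
    refine Matrix.posSemidef_sum S ?_
    intro j _
    simpa using Matrix.posSemidef_vecMulVec_self_star (v j)
  have hdet : IsUnit M.det := hpd.det_pos.ne'.isUnit
  set u : Fin n → ℝ := M⁻¹.mulVec Y with hu
  have hMu : M.mulVec u = Y := by
    rw [hu, Matrix.mulVec_mulVec, Matrix.mul_nonsing_inv _ hdet, Matrix.one_mulVec]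
  have hexp : M.mulVec u = u + ∑ j ∈ S, (γ * (v j ⬝ᵥ u)) • v j := by
    rw [hM, Matrix.add_mulVec, Matrix.one_mulVec, Matrix.smul_mulVec, Matrix.sum_mulVec,
      Finset.smul_sum]
    congr 1
    refine Finset.sum_congr rfl fun j _ => ?_
    rw [Matrix.vecMulVec_mulVec]
    ext i
    simp
    ring
  have hY : Y = u + ∑ j ∈ S, (γ * (v j ⬝ᵥ u)) • v j := by rw [← hexp, hMu]
  have huY : Y ⬝ᵥ u = u ⬝ᵥ u + γ * ∑ j ∈ S, (v j ⬝ᵥ u) ^ 2 := by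
    conv_lhs => rw [hY]
    rw [add_dotProduct, sum_dotProduct, Finset.mul_sum]
    congr 1
    refine Finset.sum_congr rfl fun j _ => ?_
    rw [smul_dotProduct, smul_eq_mul]
    ring
  have hsum : ∑ j ∈ S, (if j ∈ S then γ * (v j ⬝ᵥ u) else 0) • v j
      = ∑ j ∈ S, (γ * (v j ⬝ᵥ u)) • v j :=
    Finset.sum_congr rfl fun j hj => by rw [if_pos hj]
  have hsq : ∑ j ∈ S, (if j ∈ S then γ * (v j ⬝ᵥ u) else 0) ^ 2
      = γ ^ 2 * ∑ j ∈ S, (v j ⬝ᵥ u) ^ 2 := by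
    rw [Finset.mul_sum]
    exact Finset.sum_congr rfl fun j hj => by rw [if_pos hj]; ring
  have hres : Y - ∑ j ∈ S, (γ * (v j ⬝ᵥ u)) • v j = u := sub_eq_of_eq_add hY
  have hval : (1/2) * (u ⬝ᵥ u) + (1/(2*γ)) * (γ ^ 2 * ∑ j ∈ S, (v j ⬝ᵥ u) ^ 2)
      = (1/2) * (Y ⬝ᵥ u) := by
    rw [huY]
    field_simp
  refine ⟨fun j => if j ∈ S then γ * (v j ⬝ᵥ u) else 0, fun j hj => if_neg hj, ?_, ?_⟩
  · intro w _
    simp only [hsum, hsq, hres]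
    rw [hval]
    set r : Fin n → ℝ := Y - ∑ j ∈ S, w j • v j with hr
    have hYr : Y ⬝ᵥ u = r ⬝ᵥ u + ∑ j ∈ S, w j * (v j ⬝ᵥ u) := by
      rw [hr, sub_dotProduct, sum_dotProduct]
      simp only [smul_dotProduct, smul_eq_mul]
      ring
    have h1 : 0 ≤ (r - u) ⬝ᵥ (r - u) := Finset.sum_nonneg fun i _ => mul_self_nonneg _
    have h2 : (r - u) ⬝ᵥ (r - u) = r ⬝ᵥ r - 2 * (r ⬝ᵥ u) + u ⬝ᵥ u := by
      rw [sub_dotProduct, dotProduct_sub r r u, dotProduct_sub u r u, dotProduct_comm u r]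
      ring
    have h3 : ∑ j ∈ S, w j * (v j ⬝ᵥ u) ≤
        ∑ j ∈ S, ((1/(2*γ)) * (w j) ^ 2 + (γ/2) * (v j ⬝ᵥ u) ^ 2) := by
      refine Finset.sum_le_sum fun j _ => ?_
      have h4 : (1/(2*γ)) * (w j) ^ 2 + (γ/2) * (v j ⬝ᵥ u) ^ 2 - w j * (v j ⬝ᵥ u)
          = (1/(2*γ)) * (w j - γ * (v j ⬝ᵥ u)) ^ 2 := by
        field_simp
        ring
      have h5 : 0 ≤ (1/(2*γ)) * (w j - γ * (v j ⬝ᵥ u)) ^ 2 := by positivity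
      linarith
    rw [Finset.sum_add_distrib, ← Finset.mul_sum, ← Finset.mul_sum] at h3
    linarith
  · simp only [hsum, hsq, hres]
    exact hval
end

section
/- Let n, p, f be positive integers, let Y ∈ ℝ^n, let γ > 0, let v₁, …, v_f ∈ ℝ^n be feature vectors, let A : {1,…,f} → Finset({1,…,p}) assign to each feature index j its set of ancestor inputs, and let k ≤ p and ℓ ≤ f be positive integers. Define the micro kernel matrices K_j := v_j v_jᵀ. Then the minimum, over all w ∈ ℝ^f such that |supp(w)| ≤ ℓ and there exists h ∈ {0,1}^p with Σ_{i=1}^p h_i ≤ k and such that for every j ∈ supp(w) and every i ∈ A(j) one has h_i = 1, of (1/2)‖Y − Σ_{j=1}^f w_j v_j‖² + (1/(2γ))‖w‖², equals the minimum, over all pairs (s, h) with s ∈ {0,1}^f, h ∈ {0,1}^p, Σ_j s_j ≤ ℓ, Σ_i h_i ≤ k, and s_j ≤ h_i for every j and every i ∈ A(j), of (1/2) Yᵀ (I_n + γ Σ_{j=1}^f s_j K_j)⁻¹ Y. -/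
open Matrix

theorem hsr_exists_u {n f : ℕ} (Y : Fin n → ℝ) (γ : ℝ) (hγ : 0 < γ) (v : Fin f → Fin n → ℝ)
    (s : Fin f → ℝ) (hs : ∀ j, s j = 0 ∨ s j = 1) :
    ∃ u : Fin n → ℝ,
      (Y ⬝ᵥ ((1 + γ • ∑ j, s j • vecMulVec (v j) (v j))⁻¹.mulVec Y)) = Y ⬝ᵥ u ∧
      Y - ∑ j, (γ * s j * (v j ⬝ᵥ u)) • v j = u := by
  have hpd : (1 + γ • ∑ j, s j • vecMulVec (v j) (v j) : Matrix (Fin n) (Fin n) ℝ).PosDef := by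
    apply Matrix.PosDef.one.add_posSemidef
    apply Matrix.PosSemidef.smul _ hγ.le
    apply Matrix.posSemidef_sum
    intro j _
    apply Matrix.PosSemidef.smul
    · simpa using Matrix.posSemidef_vecMulVec_self_star (v j)
    · rcases hs j with h | h <;> simp [h]
  set M := (1 + γ • ∑ j, s j • vecMulVec (v j) (v j) : Matrix (Fin n) (Fin n) ℝ) with hM
  have hdet : IsUnit M.det := (Matrix.isUnit_iff_isUnit_det _).1 hpd.isUnit
  refine ⟨M⁻¹ *ᵥ Y, rfl, ?_⟩
  have h1 : M *ᵥ (M⁻¹ *ᵥ Y) = Y := by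
    rw [Matrix.mulVec_mulVec, Matrix.mul_nonsing_inv _ hdet, Matrix.one_mulVec]
  generalize M⁻¹ *ᵥ Y = u at h1 ⊢
  rw [← h1, hM, Matrix.add_mulVec, Matrix.one_mulVec, Matrix.smul_mulVec, Matrix.sum_mulVec,
    Finset.smul_sum]
  have : ∀ j, γ • ((s j • vecMulVec (v j) (v j)) *ᵥ u) = (γ * s j * (v j ⬝ᵥ u)) • v j := by
    intro j
    rw [Matrix.smul_mulVec, Matrix.vecMulVec_mulVec]
    ext i
    simp
    ring
  simp only [this]
  simp

theorem hsr_value {n f : ℕ} (Y : Fin n → ℝ) (γ : ℝ) (hγ : 0 < γ) (v : Fin f → Fin n → ℝ)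
    (s : Fin f → ℝ) (hs : ∀ j, s j = 0 ∨ s j = 1) (u : Fin n → ℝ)
    (hu : Y - ∑ j, (γ * s j * (v j ⬝ᵥ u)) • v j = u) :
    (u ⬝ᵥ u) + γ * ∑ j, s j * (v j ⬝ᵥ u)^2 = Y ⬝ᵥ u := by
  have h2 : Y = u + ∑ j, (γ * s j * (v j ⬝ᵥ u)) • v j := by
    rw [← sub_eq_iff_eq_add]; exact hu
  have h3 : Y ⬝ᵥ u = u ⬝ᵥ u + ∑ j, (γ * s j * (v j ⬝ᵥ u)) * (v j ⬝ᵥ u) := by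
    conv_lhs => rw [h2]
    rw [add_dotProduct, sum_dotProduct]
    simp only [smul_dotProduct, smul_eq_mul]
  rw [h3, Finset.mul_sum]
  congr 1
  apply Finset.sum_congr rfl
  intros
  ring

theorem hsr_attain {n f : ℕ} (Y : Fin n → ℝ) (γ : ℝ) (hγ : 0 < γ) (v : Fin f → Fin n → ℝ)
    (s : Fin f → ℝ) (hs : ∀ j, s j = 0 ∨ s j = 1) (u : Fin n → ℝ)
    (hu : Y - ∑ j, (γ * s j * (v j ⬝ᵥ u)) • v j = u) :
    (1/2) * (Y ⬝ᵥ u) = (1/2) * (u ⬝ᵥ u) + (1/(2*γ)) *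
      ((fun j => γ * s j * (v j ⬝ᵥ u)) ⬝ᵥ (fun j => γ * s j * (v j ⬝ᵥ u))) := by
  rw [← hsr_value Y γ hγ v s hs u hu]
  have : ((fun j => γ * s j * (v j ⬝ᵥ u)) ⬝ᵥ (fun j => γ * s j * (v j ⬝ᵥ u)))
      = γ ^ 2 * ∑ j, s j * (v j ⬝ᵥ u)^2 := by
    rw [dotProduct, Finset.mul_sum]
    apply Finset.sum_congr rfl
    intro j _
    rcases hs j with h | h <;> simp only [h] <;> ring
  rw [this]
  field_simp

theorem hsr_lower {n f : ℕ} (Y : Fin n → ℝ) (γ : ℝ) (hγ : 0 < γ) (v : Fin f → Fin n → ℝ)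
    (s : Fin f → ℝ) (hs : ∀ j, s j = 0 ∨ s j = 1) (u : Fin n → ℝ)
    (hu : Y - ∑ j, (γ * s j * (v j ⬝ᵥ u)) • v j = u) (w : Fin f → ℝ)
    (hw : ∀ j, w j ≠ 0 → s j = 1) :
    (1/2) * (Y ⬝ᵥ u) ≤ (1/2) * ((Y - ∑ j, w j • v j) ⬝ᵥ (Y - ∑ j, w j • v j)) +
              (1/(2*γ)) * (w ⬝ᵥ w) := by
  have hval := hsr_value Y γ hγ v s hs u hu
  have hru : (Y - ∑ j, w j • v j) ⬝ᵥ u = Y ⬝ᵥ u - ∑ j, w j * (v j ⬝ᵥ u) := by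
    rw [sub_dotProduct, sum_dotProduct]
    simp only [smul_dotProduct, smul_eq_mul]
  generalize Y - ∑ j, w j • v j = r at hru ⊢
  have h1 : 0 ≤ (r - u) ⬝ᵥ (r - u) := by
    rw [dotProduct]
    exact Finset.sum_nonneg fun i _ => mul_self_nonneg _
  have h1' : (r - u) ⬝ᵥ (r - u) = r ⬝ᵥ r - 2 * (r ⬝ᵥ u) + u ⬝ᵥ u := by
    rw [sub_dotProduct, dotProduct_sub, dotProduct_sub, dotProduct_comm u r]
    ring
  have h2 : ∑ j, (w j * (v j ⬝ᵥ u) - γ / 2 * (s j * (v j ⬝ᵥ u)^2)) ≤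
      (1/(2*γ)) * (w ⬝ᵥ w) := by
    rw [dotProduct, Finset.mul_sum]
    apply Finset.sum_le_sum
    intro j _
    by_cases h : w j = 0
    · have : 0 ≤ s j := by rcases hs j with h | h <;> simp [h]
      have : 0 ≤ γ / 2 * (s j * (v j ⬝ᵥ u)^2) := by positivity
      simp only [h]
      linarith
    · rw [hw j h]
      have : (1/(2*γ)) * (w j * w j) - (w j * (v j ⬝ᵥ u) - γ / 2 * (1 * (v j ⬝ᵥ u)^2))
        = (1/(2*γ)) * (w j - γ * (v j ⬝ᵥ u))^2 := by
        field_simp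
        ring
      have : 0 ≤ (1/(2*γ)) * (w j - γ * (v j ⬝ᵥ u))^2 := by positivity
      linarith
  rw [Finset.sum_sub_distrib, ← Finset.mul_sum] at h2
  linarith

/-- the hierarchical `(k,ℓ)`-sparse ridge regression problem equals the
pure binary optimization problem `min (1/2) Yᵀ (I_n + γ Σ_j s_j K_j)⁻¹ Y` over hierarchical
binary sparsity patterns `(s, h)`, where `K_j = v_j v_jᵀ`.  Both minima exist and agree. -/
theorem hierarchical_sparse_regression (n p f : ℕ) (hn : 0 < n) (hp : 0 < p) (hf : 0 < f)
    (Y : Fin n → ℝ) (γ : ℝ) (hγ : 0 < γ) (v : Fin f → Fin n → ℝ)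
    (A : Fin f → Finset (Fin p)) (k ℓ : ℕ) (hk : 0 < k) (hkp : k ≤ p)
    (hℓ : 0 < ℓ) (hℓf : ℓ ≤ f) :
    ∃ m : ℝ,
      IsLeast {x : ℝ | ∃ w : Fin f → ℝ,
        (Finset.univ.filter (fun j => w j ≠ 0)).card ≤ ℓ ∧
        (∃ h : Fin p → ℝ, (∀ i, h i = 0 ∨ h i = 1) ∧ (∑ i, h i) ≤ (k : ℝ) ∧
          ∀ j, w j ≠ 0 → ∀ i ∈ A j, h i = 1) ∧
        x = (1/2) * ((Y - ∑ j, w j • v j) ⬝ᵥ (Y - ∑ j, w j • v j)) +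
              (1/(2*γ)) * (w ⬝ᵥ w)} m ∧
      IsLeast {x : ℝ | ∃ s : Fin f → ℝ, ∃ h : Fin p → ℝ,
        (∀ j, s j = 0 ∨ s j = 1) ∧ (∀ i, h i = 0 ∨ h i = 1) ∧
        (∑ j, s j) ≤ (ℓ : ℝ) ∧ (∑ i, h i) ≤ (k : ℝ) ∧
        (∀ j, ∀ i ∈ A j, s j ≤ h i) ∧
        x = (1/2) * (Y ⬝ᵥ ((1 + γ • ∑ j, s j • vecMulVec (v j) (v j))⁻¹.mulVec Y))} m := by
  set S : Set ℝ := {x : ℝ | ∃ s : Fin f → ℝ, ∃ h : Fin p → ℝ,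
        (∀ j, s j = 0 ∨ s j = 1) ∧ (∀ i, h i = 0 ∨ h i = 1) ∧
        (∑ j, s j) ≤ (ℓ : ℝ) ∧ (∑ i, h i) ≤ (k : ℝ) ∧
        (∀ j, ∀ i ∈ A j, s j ≤ h i) ∧
        x = (1/2) * (Y ⬝ᵥ ((1 + γ • ∑ j, s j • vecMulVec (v j) (v j))⁻¹.mulVec Y))} with hS
  have hfin : S.Finite := by
    have hF : (Set.univ.pi (fun _ : Fin f => ({0, 1} : Set ℝ))).Finite :=
      Set.Finite.pi' (fun _ => by simp) |>.subset (fun x hx i => hx i trivial)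
    refine (hF.image (fun s => (1/2) *
      (Y ⬝ᵥ ((1 + γ • ∑ j, s j • vecMulVec (v j) (v j))⁻¹.mulVec Y)))).subset ?_
    rintro x ⟨s, h, hs, -, -, -, -, rfl⟩
    exact ⟨s, fun j _ => by simpa using hs j, rfl⟩
  have hne : S.Nonempty :=
    ⟨_, 0, 0, by simp, by simp, by simp, by simp, by simp, rfl⟩
  obtain ⟨m, hmS, hmin⟩ := Set.exists_min_image S id hfin hne
  refine ⟨m, ⟨?_, ?_⟩, hmS, hmin⟩
  · obtain ⟨s, h, hs, hh, hsl, hhk, hsh, rfl⟩ := hmS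
    obtain ⟨u, hu1, hu2⟩ := hsr_exists_u Y γ hγ v s hs
    have hs1 : ∀ j, γ * s j * (v j ⬝ᵥ u) ≠ 0 → s j = 1 := by
      intro j hj
      rcases hs j with h0 | h1
      · simp [h0] at hj
      · exact h1
    refine ⟨fun j => γ * s j * (v j ⬝ᵥ u), ?_, ⟨h, hh, hhk, ?_⟩, ?_⟩
    · have : ((Finset.univ.filter (fun j => γ * s j * (v j ⬝ᵥ u) ≠ 0)).card : ℝ) ≤ ∑ j, s j := by
        rw [Finset.card_filter]
        push_cast
        apply Finset.sum_le_sum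
        intro j _
        split_ifs with hj
        · rw [hs1 j hj]
        · rcases hs j with h | h <;> simp [h]
      exact_mod_cast this.trans hsl
    · intro j hj i hi
      have h1 := hs1 j hj
      have h2 := hsh j i hi
      rcases hh i with h0 | h0
      · rw [h1, h0] at h2
        norm_num at h2
      · exact h0
    · rw [hu1, hu2]
      exact hsr_attain Y γ hγ v s hs u hu2
  · rintro x ⟨w, hwl, ⟨h, hh, hhk, hwh⟩, rfl⟩
    have hs : ∀ j, (fun j => if w j ≠ 0 then (1 : ℝ) else 0) j = 0 ∨
        (fun j => if w j ≠ 0 then (1 : ℝ) else 0) j = 1 := by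
      intro j
      by_cases hj : w j = 0 <;> simp [hj]
    obtain ⟨u, hu1, hu2⟩ := hsr_exists_u Y γ hγ v _ hs
    refine le_trans ?_ (hsr_lower Y γ hγ v _ hs u hu2 w (fun j hj => by simp [hj]))
    rw [← hu1]
    refine hmin _ ⟨_, h, hs, hh, ?_, hhk, ?_, rfl⟩
    · rw [Finset.card_filter] at hwl
      exact_mod_cast hwl
    · intro j i hi
      by_cases hj : w j = 0
      · rcases hh i with h0 | h0 <;> simp [hj, h0]
      · simp [hj, hwh j hj i hi]
end

section
/- Let n, p, r be positive integers, let x₁, …, x_n ∈ ℝ^p be data points, let γ be a real number, let a ∈ ℝ^n, and fix an input index i ∈ {1,…,p}. For each multi-index α with |α| ≤ r define c_α := r! / ((r − |α|)! · Π_j (α_j)!) and define the coefficient w_α := γ · Σ_{t=1}^n a_t · √(c_α) · Π_{j=1}^p (x_{t,j})^{α_j}. Then the sum of squares of the coefficients of all monomials depending on input i satisfies Σ_{α : |α| ≤ r, α_i > 0} (w_α)² = γ² · Σ_{t=1}^n Σ_{t'=1}^n a_t a_{t'} · [ (1 + x_tᵀ x_{t'})^r − (1 + x_tᵀ x_{t'}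 − x_{t,i} x_{t',i})^r ]. -/
theorem aux_expand (p r : ℕ) (y : Fin p → ℝ) :
    (1 + ∑ j, y j) ^ r = ∑ α ∈ ((Fintype.piFinset fun _ : Fin p => Finset.range (r + 1)).filter
        (fun α : Fin p → ℕ => ∑ j, α j ≤ r)),
      ((r.factorial / ((r - ∑ j, α j).factorial * ∏ j, (α j).factorial) : ℕ) : ℝ) *
        ∏ j, y j ^ α j := by
  have h : (1 + ∑ j, y j) = ∑ j : Fin (p + 1), (Fin.cons 1 y : Fin (p + 1) → ℝ) j := by
    simp [Fin.sum_univ_succ]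
  rw [h, Finset.sum_pow_eq_sum_piAntidiag]
  refine Finset.sum_bij' (fun k _ => Fin.tail k)
    (fun α _ => (Fin.cons (r - ∑ j, α j) α : Fin (p + 1) → ℕ)) ?_ ?_ ?_ ?_ ?_
  · intro k hk
    have hk : ∑ j, k j = r := by simpa using hk
    rw [Fin.sum_univ_succ] at hk
    have hle : ∑ j, Fin.tail k j ≤ r := by simp only [Fin.tail]; omega
    simp only [Finset.mem_filter, Fintype.mem_piFinset, Finset.mem_range]
    refine ⟨fun j => ?_, hle⟩
    have := Finset.single_le_sum (f := Fin.tail k) (fun _ _ => Nat.zero_le _) (Finset.mem_univ j)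
    omega
  · intro α hα
    have hα := (Finset.mem_filter.mp hα).2
    have : (r - ∑ j, α j) + ∑ j, α j = r := by omega
    simpa [Fin.sum_univ_succ] using this
  · intro k hk
    have hk : ∑ j, k j = r := by simpa using hk
    rw [Fin.sum_univ_succ] at hk
    have : r - ∑ j, Fin.tail k j = k 0 := by simp only [Fin.tail]; omega
    simp only [this]
    exact Fin.cons_self_tail k
  · intro α hα
    exact Fin.tail_cons _ _
  · intro k hk
    have hk : ∑ j, k j = r := by simpa using hk
    have hk2 := hk
    rw [Fin.sum_univ_succ] at hk
    have : r - ∑ j, Fin.tail k j = k 0 := by simp only [Fin.tail]; omega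
    rw [this, Nat.multinomial, hk2, Fin.prod_univ_succ, Fin.prod_univ_succ]
    simp [Fin.tail]

theorem aux_diff (p r : ℕ) (y : Fin p → ℝ) (i : Fin p) :
    (1 + ∑ j, y j) ^ r - (1 + (∑ j, y j) - y i) ^ r =
    ∑ α ∈ ((Fintype.piFinset fun _ : Fin p => Finset.range (r + 1)).filter
        (fun α : Fin p → ℕ => ∑ j, α j ≤ r ∧ 0 < α i)),
      ((r.factorial / ((r - ∑ j, α j).factorial * ∏ j, (α j).factorial) : ℕ) : ℝ) *
        ∏ j, y j ^ α j := by
  have h : (1 + (∑ j, y j) - y i) = 1 + ∑ j, Function.update y i 0 j := by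
    rw [Finset.sum_update_of_mem (Finset.mem_univ i),
      ← Finset.add_sum_erase _ y (Finset.mem_univ i), Finset.sdiff_singleton_eq_erase]
    ring
  rw [h, aux_expand, aux_expand, ← Finset.sum_sub_distrib, ← Finset.filter_filter,
    Finset.sum_filter (fun α : Fin p → ℕ => 0 < α i)]
  refine Finset.sum_congr rfl fun α _ => ?_
  split_ifs with hi
  · rw [Finset.prod_eq_zero (f := fun j => Function.update y i 0 j ^ α j) (Finset.mem_univ i)]
    · simp
    · simp [hi.ne']
  · have : ∏ j, Function.update y i 0 j ^ α j = ∏ j, y j ^ α j := by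
      refine Finset.prod_congr rfl fun j _ => ?_
      by_cases hj : j = i
      · subst hj
        simp [Nat.eq_zero_of_not_pos hi]
      · simp [hj]
    rw [this, sub_self]

/-- the sum of squares of the ridge coefficients (obtained through the
complementarity relation `w = γ m(X)ᵀ a`) of all monomials depending on input `i`
can be computed via the kernel matrices:
`Σ_{|α| ≤ r, α_i > 0} w_α² = γ² Σ_t Σ_t' a_t a_t' [(1 + x_tᵀx_t')^r − (1 + x_tᵀx_t' − x_{t,i}x_{t',i})^r]`. -/
theorem input_coefficient_norm (n p r : ℕ) (hn : 0 < n) (hp : 0 < p) (hr : 0 < r)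
    (x : Fin n → Fin p → ℝ) (γ : ℝ) (a : Fin n → ℝ) (i : Fin p) :
    ∑ α ∈ ((Fintype.piFinset fun _ : Fin p => Finset.range (r + 1)).filter
        (fun α : Fin p → ℕ => ∑ j, α j ≤ r ∧ 0 < α i)),
      (γ * ∑ t, a t *
          Real.sqrt ((r.factorial / ((r - ∑ j, α j).factorial * ∏ j, (α j).factorial) : ℕ)) *
          ∏ j, (x t j) ^ α j) ^ 2
      = γ ^ 2 * ∑ t, ∑ t', a t * a t' *
          ((1 + ∑ j, x t j * x t' j) ^ r -
           (1 + (∑ j, x t j * x t' j) - x t i * x t' i) ^ r) := by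
  have key : ∀ t t', (1 + ∑ j, x t j * x t' j) ^ r -
           (1 + (∑ j, x t j * x t' j) - x t i * x t' i) ^ r = _ :=
    fun t t' => aux_diff p r (fun j => x t j * x t' j) i
  simp only [key, Finset.mul_sum]
  rw [Finset.sum_congr rfl fun t _ => Finset.sum_comm, Finset.sum_comm]
  refine Finset.sum_congr rfl fun α _ => ?_
  rw [sq, Finset.sum_mul_sum]
  refine Finset.sum_congr rfl fun t _ => Finset.sum_congr rfl fun t' _ => ?_
  simp only [mul_pow, Finset.prod_mul_distrib]
  generalize r.factorial / ((r - ∑ j, α j).factorial * ∏ j, (α j).factorial) = c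
  have hc : Real.sqrt (c : ℝ) * Real.sqrt (c : ℝ) = c := Real.mul_self_sqrt (Nat.cast_nonneg c)
  generalize Real.sqrt (c : ℝ) = s at hc ⊢
  rw [← hc]
  ring
end

section
/- Let n be a positive integer, let Y ∈ ℝ^n, let γ > 0, and let K, K̄ ∈ ℝ^{n×n} be symmetric positive semidefinite matrices. Define c(M) := (1/2) Yᵀ (I_n + γ M)⁻¹ Y and let α⋆ := (I_n + γ K)⁻¹ Y. Then c(K̄) ≥ c(K) − (γ/2) · α⋆ᵀ (K̄ − K) α⋆. In other words, the map M ↦ −(γ/2) α⋆ᵀ M α⋆ (up to the affine offset) is a subgradient linearization of c at K: the affine function M ↦ c(K) − (γ/2) α⋆ᵀ(M − K)α⋆ underestimates c on the positive semidefinite cone and is tight at K. -/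
open Matrix

/-- subgradient inequality for the regression loss
`c(M) = (1/2) Yᵀ (I_n + γ M)⁻¹ Y`: with `α⋆ = (I_n + γ K)⁻¹ Y`, for every positive
semidefinite `K̄` one has `c(K̄) ≥ c(K) − (γ/2) α⋆ᵀ (K̄ − K) α⋆`. -/
theorem regression_loss_subgradient (n : ℕ) (hn : 0 < n) (Y : Fin n → ℝ)
    (γ : ℝ) (hγ : 0 < γ) (K Kbar : Matrix (Fin n) (Fin n) ℝ)
    (hK : K.PosSemidef) (hKbar : Kbar.PosSemidef) :
    (1/2) * (Y ⬝ᵥ ((1 + γ • Kbar)⁻¹.mulVec Y)) ≥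
      (1/2) * (Y ⬝ᵥ ((1 + γ • K)⁻¹.mulVec Y)) -
      (γ/2) * (((1 + γ • K)⁻¹.mulVec Y) ⬝ᵥ (Kbar - K).mulVec ((1 + γ • K)⁻¹.mulVec Y)) := by
  have key : ∀ M : Matrix (Fin n) (Fin n) ℝ, M.PosSemidef →
      (1 + γ • M)⁻¹.mulVec Y + γ • (M.mulVec ((1 + γ • M)⁻¹.mulVec Y)) = Y := by
    intro M hM
    have hpd : (1 + γ • M).PosDef := Matrix.PosDef.one.add_posSemidef (hM.smul hγ.le)
    have hu : IsUnit (1 + γ • M).det := (Matrix.isUnit_iff_isUnit_det _).1 hpd.isUnit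
    have h : (1 + γ • M).mulVec ((1 + γ • M)⁻¹.mulVec Y) = Y := by
      rw [Matrix.mulVec_mulVec, Matrix.mul_nonsing_inv _ hu, Matrix.one_mulVec]
    rwa [Matrix.add_mulVec, Matrix.one_mulVec, Matrix.smul_mulVec] at h
  have ha := key K hK
  have hb := key Kbar hKbar
  generalize (1 + γ • K)⁻¹.mulVec Y = a at *
  generalize (1 + γ • Kbar)⁻¹.mulVec Y = b at *
  have hsym : b ⬝ᵥ Kbar.mulVec a = a ⬝ᵥ Kbar.mulVec b := by
    have ht : Kbarᵀ = Kbar := by simpa using hKbar.isHermitian.eq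
    rw [Matrix.dotProduct_mulVec, ← Matrix.mulVec_transpose, ht, dotProduct_comm]
  have hp : 0 ≤ (a - b) ⬝ᵥ Kbar.mulVec (a - b) := by
    simpa using hKbar.dotProduct_mulVec_nonneg (a - b)
  have hq : 0 ≤ (a - b) ⬝ᵥ (a - b) := by
    simpa using dotProduct_star_self_nonneg (a - b)
  have hp' := mul_nonneg hγ.le hp
  have e1 : Y ⬝ᵥ a = a ⬝ᵥ a + γ * (a ⬝ᵥ K.mulVec a) := by
    conv_lhs => rw [dotProduct_comm, ← ha]
    rw [dotProduct_add, dotProduct_smul, smul_eq_mul]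
  have e2 : Y ⬝ᵥ a = a ⬝ᵥ b + γ * (a ⬝ᵥ Kbar.mulVec b) := by
    conv_lhs => rw [dotProduct_comm, ← hb]
    rw [dotProduct_add, dotProduct_smul, smul_eq_mul]
  have e3 : Y ⬝ᵥ b = b ⬝ᵥ b + γ * (b ⬝ᵥ Kbar.mulVec b) := by
    conv_lhs => rw [dotProduct_comm, ← hb]
    rw [dotProduct_add, dotProduct_smul, smul_eq_mul]
  have hab : b ⬝ᵥ a = a ⬝ᵥ b := dotProduct_comm _ _
  simp only [Matrix.mulVec_sub, Matrix.sub_mulVec, dotProduct_sub, sub_dotProduct, hsym, hab]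
    at hp' hq ⊢
  nlinarith
end
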